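/- For every integer n ≥ 0, p(49n+19) ≡ 0 (mod 49). -/

import Mathlib

/-- The partition function `p(n)`: the number of partitions of `n`. -/
def p (n : ℕ) : ℕ := Fintype.card (Nat.Partition n)

open PowerSeries

/-- Gaussian binomial coefficients, as power series in `q = X`. -/
noncomputable def gb : ℕ → ℕ → ℤ⟦X⟧
  | _, 0 => 1
  | 0, _ + 1 => 0
  | m + 1, k + 1 => gb m k + X ^ (k + 1) * gb m (k + 1)

lemma gb_zero (m : ℕ) : gb m 0 = 1 := by cases m <;> rfl

lemma gb_succ (m k : ℕ) : gb (m + 1) (k + 1) = gb m k + X ^ (k + 1) * gb m (k + 1) := rfl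

lemma gb_lt (m : ℕ) : ∀ k, m < k → gb m k = 0 := by
  induction m with
  | zero => intro k hk; obtain ⟨k, rfl⟩ := Nat.exists_eq_add_of_lt hk; rw [Nat.zero_add]; rfl
  | succ m ih =>
    intro k hk
    obtain ⟨k, rfl⟩ : ∃ j, k = j + 1 := ⟨k - 1, by omega⟩
    rw [gb_succ, ih k (by omega), ih (k + 1) (by omega)]
    simp

lemma gb_self (m : ℕ) : gb m m = 1 := by
  induction m with
  | zero => rfl
  | succ m ih => rw [gb_succ, ih, gb_lt m (m + 1) (by omega)]; simp

/-- The finite product `(q; q)_n`. -/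
noncomputable def qp (n : ℕ) : ℤ⟦X⟧ := ∏ i ∈ Finset.range n, (1 - X ^ (i + 1))

lemma qp_succ (n : ℕ) : qp (n + 1) = qp n * (1 - X ^ (n + 1)) := by
  rw [qp, Finset.prod_range_succ, qp]

lemma gb_mul (k : ℕ) : ∀ m, gb (m + k) k * qp k * qp m = qp (m + k) := by
  induction k with
  | zero => intro m; simp [gb_zero, qp]
  | succ k ihk =>
    intro m
    induction m with
    | zero => simp [gb_self, qp]
    | succ m ihm =>
      have h1 := ihk (m + 1)
      have h2 : m + 1 + (k + 1) = (m + (k + 1)) + 1 := by ring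
      have h3 : m + 1 + k = m + (k + 1) := by ring
      rw [h2, gb_succ, qp_succ (m + (k + 1))]
      rw [h3] at h1
      have e1 := qp_succ k
      have e2 := qp_succ m
      have e3 : (X : ℤ⟦X⟧) ^ (m + (k + 1) + 1) = X ^ (k + 1) * X ^ (m + 1) := by ring
      rw [e3]
      generalize qp (m + (k + 1)) = Q at *
      generalize (X : ℤ⟦X⟧) ^ (k + 1) = u at *
      generalize (X : ℤ⟦X⟧) ^ (m + 1) = v at *
      linear_combination (1 - u) * h1 + u * (1 - v) * ihm
        + gb (m + (k + 1)) k * qp (m + 1) * e1 + u * gb (m + (k + 1)) (k + 1) * qp (k + 1) * e2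

/-- the (homogeneous) q-binomial theorem -/
lemma qbinom {A : Type*} [CommRing A] (q : A) (φ : ℤ⟦X⟧ →+* A) (hq : φ X = q) (y : A) (m : ℕ) :
    ∀ z : A, ∏ i ∈ Finset.range m, (y + z * q ^ i) =
    ∑ k ∈ Finset.range (m + 1), q ^ (k.choose 2) * φ (gb m k) * z ^ k * y ^ (m - k) := by
  induction m with
  | zero => intro z; simp [gb_zero]
  | succ m ih =>
    intro z
    rw [Finset.prod_range_succ']
    have := ih (z * q)
    have h2 : ∏ k ∈ Finset.range m, (y + z * q ^ (k + 1)) =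
      ∏ i ∈ Finset.range m, (y + z * q * q ^ i) := by
      refine Finset.prod_congr rfl fun i _ => ?_
      ring
    rw [h2, this, pow_zero, mul_one, mul_add]
    rw [Finset.sum_range_succ' _ (m + 1)]
    have h3 : ∀ k ∈ Finset.range (m + 1),
      q ^ ((k + 1).choose 2) * φ (gb (m + 1) (k + 1)) * z ^ (k + 1) * y ^ (m + 1 - (k + 1))
      = q ^ (k.choose 2) * φ (gb m k) * (z * q) ^ k * y ^ (m - k) * z
      + q ^ ((k + 1).choose 2) * φ (gb m (k + 1)) * (z * q) ^ (k + 1) * y ^ (m - k) := by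
      intro k _
      have : (k + 1).choose 2 = k + k.choose 2 := by
        rw [Nat.choose_succ_succ' k 1, Nat.choose_one_right]
      rw [gb_succ, this, Nat.add_sub_add_right]
      simp only [map_mul, map_add, map_pow, hq]
      ring
    rw [Finset.sum_congr rfl h3, Finset.sum_add_distrib, ← Finset.sum_mul]
    rw [Finset.sum_range_succ
      (fun k => q ^ ((k + 1).choose 2) * φ (gb m (k + 1)) * (z * q) ^ (k + 1) * y ^ (m - k)) m]
    rw [gb_lt m (m + 1) (by omega)]
    have h4 : (∑ k ∈ Finset.range (m + 1),
        q ^ (k.choose 2) * φ (gb m k) * (z * q) ^ k * y ^ (m - k)) * y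
      = ∑ k ∈ Finset.range m,
        q ^ ((k + 1).choose 2) * φ (gb m (k + 1)) * (z * q) ^ (k + 1) * y ^ (m - k)
      + y ^ (m + 1) := by
      rw [Finset.sum_range_succ', add_mul, Finset.sum_mul]
      congr 1
      · refine Finset.sum_congr rfl fun k hk => ?_
        rw [Finset.mem_range] at hk
        have : m - k = (m - (k + 1)) + 1 := by omega
        rw [this, pow_succ y]; ring
      · simp [gb_zero, pow_succ]
    rw [h4]
    simp [gb_zero]
    ring

open Polynomial in
lemma finite_jacobi_aux (n : ℕ) :
    (∏ i ∈ Finset.range n, (-(PowerSeries.X : ℤ⟦X⟧) ^ n + PowerSeries.X ^ i)) * PowerSeries.X ^ n *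
      (∏ i ∈ Finset.range n, (-(PowerSeries.X : ℤ⟦X⟧) ^ n + PowerSeries.X ^ (n + 1 + i))) =
    ∑ k ∈ Finset.range (2 * n + 2), (k : ℤ⟦X⟧) *
      (PowerSeries.X ^ (k.choose 2) * gb (2 * n + 1) k * (-PowerSeries.X ^ n) ^ (2 * n + 1 - k)) := by
  have h := qbinom (Polynomial.C (PowerSeries.X : ℤ⟦X⟧)) Polynomial.C rfl
    (Polynomial.C (-PowerSeries.X ^ n)) (2 * n + 1) Polynomial.X
  simp only [← map_pow, ← map_mul] at h
  have h0 : 2 * n + 1 = n + 1 + n := by ring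
  have h1 : ∏ i ∈ Finset.range (2 * n + 1), (Polynomial.C (-(PowerSeries.X : ℤ⟦X⟧) ^ n) + Polynomial.X * Polynomial.C (PowerSeries.X ^ i))
    = (Polynomial.X - 1) * ((∏ i ∈ Finset.range n, (Polynomial.C (-(PowerSeries.X : ℤ⟦X⟧) ^ n) + Polynomial.X * Polynomial.C (PowerSeries.X ^ i)))
      * Polynomial.C (PowerSeries.X ^ n) * ∏ i ∈ Finset.range n, (Polynomial.C (-(PowerSeries.X : ℤ⟦X⟧) ^ n) + Polynomial.X * Polynomial.C (PowerSeries.X ^ (n + 1 + i)))) := by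
    rw [h0, Finset.prod_range_add, Finset.prod_range_succ]
    simp only [Polynomial.C_neg]
    ring
  rw [h1] at h
  have h2 := congrArg (fun F => Polynomial.eval 1 (Polynomial.derivative F)) h
  have hl : ∀ G : (ℤ⟦X⟧)[X],
      Polynomial.eval 1 (Polynomial.derivative ((Polynomial.X - 1) * G)) = Polynomial.eval 1 G := by
    intro G; simp
  have hr : ∀ (a b : ℤ⟦X⟧) (k : ℕ),
      Polynomial.eval 1 (Polynomial.derivative (Polynomial.C a * Polynomial.X ^ k * Polynomial.C b))
        = k * (a * b) := by
    intro a b k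
    simp [Polynomial.derivative_X_pow]
    ring
  simp only [hl, Polynomial.derivative_sum, Polynomial.eval_finsetSum, hr] at h2
  rw [← h2]
  simp [Polynomial.eval_prod]

lemma finite_jacobi (n : ℕ) :
    X ^ (n + n.choose 2 + n * n) * (-1) ^ n * qp n ^ 2 =
    ∑ k ∈ Finset.range (2 * n + 2), (k : ℤ⟦X⟧) *
      (X ^ (k.choose 2) * gb (2 * n + 1) k * (-X ^ n) ^ (2 * n + 1 - k)) := by
  rw [← finite_jacobi_aux]
  have h1 : ∏ i ∈ Finset.range n, (-(X : ℤ⟦X⟧) ^ n + X ^ i) = X ^ (n.choose 2) * qp n := by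
    have : ∀ i ∈ Finset.range n, (-(X : ℤ⟦X⟧) ^ n + X ^ i) = X ^ i * (1 - X ^ (n - 1 - i + 1)) := by
      intro i hi
      rw [Finset.mem_range] at hi
      rw [mul_sub, ← pow_add, show i + (n - 1 - i + 1) = n by omega]; ring
    rw [Finset.prod_congr rfl this, Finset.prod_mul_distrib, Finset.prod_pow_eq_pow_sum,
      Finset.sum_range_id, Nat.choose_two_right, Finset.prod_range_reflect (fun i => 1 - (X : ℤ⟦X⟧) ^ (i + 1)), qp]
  have h2 : ∏ i ∈ Finset.range n, (-(X : ℤ⟦X⟧) ^ n + X ^ (n + 1 + i)) = X ^ (n * n) * (-1) ^ n * qp n := by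
    have : ∀ i ∈ Finset.range n, (-(X : ℤ⟦X⟧) ^ n + X ^ (n + 1 + i)) = (X ^ n * (-1)) * (1 - X ^ (i + 1)) := by
      intro i hi
      ring
    rw [Finset.prod_congr rfl this, Finset.prod_mul_distrib, Finset.prod_const, Finset.card_range, qp, mul_pow, pow_mul]
  rw [h1, h2]
  ring

/-- Euler's product. -/
noncomputable def EE : ℤ⟦X⟧ := pentagonalSeries ℤ

/-- generating function of partitions. -/
noncomputable def PP : ℤ⟦X⟧ := PowerSeries.mk fun n => (p n : ℤ)

lemma PP_mul_EE : PP * EE = 1 := by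
  let _ : TopologicalSpace ℤ := ⊥
  have : DiscreteTopology ℤ := ⟨rfl⟩
  have h1 := Nat.Partition.hasProd_powerSeriesMk_card_restricted ℤ (fun _ => True)
  have h2 := PowerSeries.WithPiTopology.hasProd_one_sub_X_pow ℤ
  open scoped PowerSeries.WithPiTopology in
  have h3 := h1.mul h2
  have h4 : ∀ i : ℕ, (∑' j : ℕ, (X : ℤ⟦X⟧) ^ ((i + 1) * j)) * (1 - X ^ (i + 1)) = 1 := by
    intro i
    simp_rw [pow_mul]
    exact PowerSeries.WithPiTopology.tsum_pow_mul_one_sub_of_constantCoeff_eq_zero (by simp)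
  simp only [if_true, h4] at h3
  have h5 := h3.unique hasProd_one
  rw [← h5, EE, PP]
  congr 2
  ext n
  simp [p, Nat.Partition.restricted]

lemma qp_congr_succ (N a b : ℕ) (ha : N ≤ a) (hab : a ≤ b) : (X : ℤ⟦X⟧) ^ (N + 1) ∣ qp b - qp a := by
  induction b, hab using Nat.le_induction with
  | base => simp
  | succ b hb ih =>
    rw [qp_succ]
    have : qp b * (1 - X ^ (b + 1)) - qp a = (qp b - qp a) - qp b * X ^ (b + 1) := by ring
    rw [this]
    exact dvd_sub ih (Dvd.dvd.mul_left (pow_dvd_pow _ (by omega)) _)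

lemma qp_congr (N a : ℕ) (ha : N ≤ a) : (X : ℤ⟦X⟧) ^ (N + 1) ∣ qp a - EE := by
  rw [PowerSeries.X_pow_dvd_iff]
  intro m hm
  have h := coeff_prod_one_sub_X_pow_eventually_eq ℤ m
  rw [Filter.eventually_atTop] at h
  obtain ⟨s, hs⟩ := h
  have h1 := hs (Finset.range (max a (s.sup id + 1))) (by
    intro i hi
    rw [Finset.mem_range]
    have : i ≤ s.sup id := Finset.le_sup (f := id) hi
    omega)
  have h2 := qp_congr_succ N a (max a (s.sup id + 1)) ha (le_max_left _ _)
  rw [PowerSeries.X_pow_dvd_iff] at h2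
  have h3 := h2 m hm
  rw [map_sub, sub_eq_zero] at h3 ⊢
  rw [← h3, qp, h1, EE]

lemma gb_congr (N a k : ℕ) (hk : N ≤ k) (ha : N ≤ a) : (X : ℤ⟦X⟧) ^ (N + 1) ∣ gb (a + k) k * EE - 1 := by
  obtain ⟨c1, h1⟩ := qp_congr N k hk
  obtain ⟨c2, h2⟩ := qp_congr N a ha
  obtain ⟨c3, h3⟩ := qp_congr N (a + k) (by omega)
  have h := gb_mul k a
  rw [sub_eq_iff_eq_add] at h1 h2 h3
  rw [h1, h2, h3] at h
  have e := PP_mul_EE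
  refine ⟨PP * (c3 - gb (a + k) k * (X ^ (N + 1) * c1 * c2 + c1 * EE + c2 * EE)), ?_⟩
  linear_combination PP * h + (1 - gb (a + k) k * EE) * e

lemma EE_cube (N : ℕ) (hN : ∀ j : ℕ, j * (j + 1) ≠ 2 * N) : coeff N (EE ^ 3) = 0 := by
  set n := 2 * N + 2 with hn
  set M := n + n.choose 2 + n * n with hM
  have h2M : 2 * M = n * (3 * n + 1) := by
    have := Nat.triangle_succ n
    have h : n.choose 2 * 2 = n * (n - 1) := by rw [Nat.choose_two_right]; exact Nat.div_mul_cancel (Nat.even_mul_pred_self n).two_dvd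
    obtain ⟨t, ht⟩ : ∃ t, n = t + 1 := ⟨2 * N + 1, by omega⟩
    rw [ht, Nat.add_sub_cancel, ← ht] at h
    rw [hM]
    nlinarith
  have hj := congrArg (fun F => coeff (N + M) (F * EE)) (finite_jacobi n)
  have hR : coeff (N + M) ((∑ k ∈ Finset.range (2 * n + 2), (k : ℤ⟦X⟧) *
      (X ^ (k.choose 2) * gb (2 * n + 1) k * (-X ^ n) ^ (2 * n + 1 - k))) * EE) = 0 := by
    rw [Finset.sum_mul, map_sum]
    refine Finset.sum_eq_zero fun k hk => ?_
    rw [Finset.mem_range] at hk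
    have e1 : (k : ℤ⟦X⟧) * (X ^ (k.choose 2) * gb (2 * n + 1) k * (-X ^ n) ^ (2 * n + 1 - k)) * EE
      = PowerSeries.C ((k : ℤ) * (-1) ^ (2 * n + 1 - k)) * (X ^ (k.choose 2 + n * (2 * n + 1 - k)) * (gb (2 * n + 1) k * EE)) := by
      rw [neg_pow]
      simp only [map_mul, map_pow, map_neg, map_one, map_natCast]
      ring
    rw [e1, PowerSeries.coeff_C_mul]
    refine mul_eq_zero_of_right _ ?_
    obtain ⟨j, hjk, he⟩ : ∃ j, (k = n + 1 + j ∨ k + j = n) ∧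
        2 * (k.choose 2 + n * (2 * n + 1 - k)) = n * (3 * n + 1) + j * (j + 1) := by
      have h2 : (2 * (k.choose 2 : ℕ) : ℤ) = k * (k - 1) := by
        have h : k.choose 2 * 2 = k * (k - 1) := by rw [Nat.choose_two_right]; exact Nat.div_mul_cancel (Nat.even_mul_pred_self k).two_dvd
        rcases k with _ | k
        · simp
        · zify at h; simp at h ⊢; linarith
      obtain ⟨l, hl⟩ : ∃ l, k + l = 2 * n + 1 := ⟨2 * n + 1 - k, by omega⟩
      have hl' : 2 * n + 1 - k = l := by omega
      rw [hl']
      rcases Nat.lt_or_ge n k with hlt | hge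
      · obtain ⟨j, hj⟩ := Nat.exists_eq_add_of_le (show n + 1 ≤ k from hlt)
        refine ⟨j, Or.inl hj, ?_⟩
        zify at hl hj ⊢
        have hl2 : (l : ℤ) = n - j := by linarith
        rw [mul_add, h2, hj, hl2]; ring
      · obtain ⟨j, hj⟩ := Nat.exists_eq_add_of_le hge
        refine ⟨j, Or.inr hj.symm, ?_⟩
        zify at hl hj ⊢
        have hl2 : (l : ℤ) = n + j + 1 := by linarith
        have hk2 : (k : ℤ) = n - j := by linarith
        rw [mul_add, h2, hk2, hl2]; ring
    rw [PowerSeries.coeff_X_pow_mul']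
    split_ifs with hle
    · have hjN : j * (j + 1) ≤ 2 * N := by omega
      have hjN2 : j ≤ N := by
        by_contra hc
        push Not at hc
        nlinarith
      obtain ⟨l, hl⟩ : ∃ l, 2 * n + 1 = l + k := ⟨2 * n + 1 - k, by omega⟩
      have hd := gb_congr N l k (by omega) (by omega)
      rw [← hl, PowerSeries.X_pow_dvd_iff] at hd
      have hne := hN j
      have h1 := hd (N + M - (k.choose 2 + n * (2 * n + 1 - k))) (by omega)
      rw [map_sub, PowerSeries.coeff_one, if_neg (by omega), sub_zero] at h1
      exact h1
    · rfl
  simp only [hR] at hj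
  have e2 : X ^ M * (-1) ^ n * qp n ^ 2 * EE = PowerSeries.C ((-1) ^ n) * (X ^ M * (qp n ^ 2 * EE)) := by
    simp only [map_pow, map_neg, map_one]; ring
  rw [← hM, e2, PowerSeries.coeff_C_mul, PowerSeries.coeff_X_pow_mul', if_pos (by omega), Nat.add_sub_cancel] at hj
  have h1 : coeff N (qp n ^ 2 * EE) = 0 := by
    rcases mul_eq_zero.1 hj with h | h
    · simp at h
    · exact h
  obtain ⟨c, hc⟩ := qp_congr N n (by omega)
  have h2 : (X : ℤ⟦X⟧) ^ (N + 1) ∣ qp n ^ 2 * EE - EE ^ 3 :=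
    ⟨c * (qp n + EE) * EE, by linear_combination (qp n + EE) * EE * hc⟩
  rw [PowerSeries.X_pow_dvd_iff] at h2
  have h3 := h2 N (by omega)
  rw [map_sub, h1] at h3
  linarith

/-- `Hom r F`: only exponents congruent to `r` modulo 7 occur in `F`. -/
def Hom (r : ℕ) (F : ℤ⟦X⟧) : Prop := ∀ n, n % 7 ≠ r % 7 → coeff n F = 0

/-- The part of `F` with exponents congruent to `r` modulo 7. -/
noncomputable def cpt (r : ℕ) (F : ℤ⟦X⟧) : ℤ⟦X⟧ :=
  PowerSeries.mk fun n => if n % 7 = r % 7 then coeff n F else 0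

lemma coeff_cpt (r n : ℕ) (F : ℤ⟦X⟧) :
    coeff n (cpt r F) = if n % 7 = r % 7 then coeff n F else 0 := by
  rw [cpt, coeff_mk]

lemma hom_cpt (r : ℕ) (F : ℤ⟦X⟧) : Hom r (cpt r F) := by
  intro n hn
  rw [coeff_cpt, if_neg hn]

lemma Hom.congr {r s : ℕ} {F : ℤ⟦X⟧} (h : Hom r F) (hrs : r % 7 = s % 7) : Hom s F := by
  intro n hn
  exact h n (by omega)

lemma Hom.add {r : ℕ} {F G : ℤ⟦X⟧} (hF : Hom r F) (hG : Hom r G) : Hom r (F + G) := by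
  intro n hn
  rw [map_add, hF n hn, hG n hn, add_zero]

lemma Hom.mul {r s : ℕ} {F G : ℤ⟦X⟧} (hF : Hom r F) (hG : Hom s G) : Hom (r + s) (F * G) := by
  intro n hn
  rw [coeff_mul]
  refine Finset.sum_eq_zero fun ij hij => ?_
  rw [Finset.HasAntidiagonal.mem_antidiagonal] at hij
  by_cases h1 : ij.1 % 7 = r % 7
  · rw [hG ij.2 (by omega), mul_zero]
  · rw [hF ij.1 h1, zero_mul]

lemma hom_int (c : ℤ) : Hom 0 (c : ℤ⟦X⟧) := by
  intro n hn
  have : (c : ℤ⟦X⟧) = PowerSeries.C c := by simp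
  rw [this, coeff_C, if_neg (by rintro rfl; simp at hn)]

lemma Hom.pow {r : ℕ} {F : ℤ⟦X⟧} (hF : Hom r F) (k : ℕ) : Hom (r * k) (F ^ k) := by
  induction k with
  | zero => simpa using hom_int 1
  | succ k ih => rw [pow_succ]; exact (ih.mul hF).congr (by rw [Nat.mul_succ])

lemma cpt_of_hom {r : ℕ} {F : ℤ⟦X⟧} (h : Hom r F) : cpt r F = F := by
  ext n
  rw [coeff_cpt]
  split_ifs with h1
  · rfl
  · exact (h n h1).symm

lemma cpt_of_hom_ne {r s : ℕ} {F : ℤ⟦X⟧} (h : Hom s F) (hrs : r % 7 ≠ s % 7) : cpt r F = 0 := by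
  ext n
  rw [coeff_cpt, map_zero]
  split_ifs with h1
  · exact h n (by omega)
  · rfl

lemma cpt_add (r : ℕ) (F G : ℤ⟦X⟧) : cpt r (F + G) = cpt r F + cpt r G := by
  ext n
  rw [map_add, coeff_cpt, coeff_cpt, coeff_cpt]
  split_ifs <;> simp

lemma cpt_mul_hom (r : ℕ) (F G : ℤ⟦X⟧) (hG : Hom 0 G) : cpt r (F * G) = cpt r F * G := by
  ext n
  rw [coeff_cpt, coeff_mul, coeff_mul]
  split_ifs with h
  · refine Finset.sum_congr rfl fun ij hij => ?_
    rw [Finset.HasAntidiagonal.mem_antidiagonal] at hij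
    rw [coeff_cpt]
    by_cases h1 : ij.2 % 7 = 0
    · rw [if_pos (by omega)]
    · rw [hG ij.2 (by omega), mul_zero, mul_zero]
  · symm
    refine Finset.sum_eq_zero fun ij hij => ?_
    rw [Finset.HasAntidiagonal.mem_antidiagonal] at hij
    rw [coeff_cpt]
    by_cases h1 : ij.2 % 7 = 0
    · rw [if_neg (by omega), zero_mul]
    · rw [hG ij.2 (by omega), mul_zero]

/-- Evaluation of a polynomial in four variables given by a list of terms. -/
noncomputable def pev (l : List (ℤ × ℕ × ℕ × ℕ × ℕ)) (x y z w : ℤ⟦X⟧) : ℤ⟦X⟧ :=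
  (l.map fun t => (t.1 : ℤ⟦X⟧) * (x ^ t.2.1 * y ^ t.2.2.1 * z ^ t.2.2.2.1 * w ^ t.2.2.2.2)).sum

lemma hom_pev (r : ℕ) (l : List (ℤ × ℕ × ℕ × ℕ × ℕ)) (x y z w : ℤ⟦X⟧)
    (hx : Hom 0 x) (hy : Hom 1 y) (hz : Hom 2 z) (hw : Hom 5 w)
    (hl : ∀ t ∈ l, (t.2.2.1 + 2 * t.2.2.2.1 + 5 * t.2.2.2.2) % 7 = r % 7) :
    Hom r (pev l x y z w) := by
  induction l with
  | nil => intro n _; simp [pev]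
  | cons t l ih =>
    rw [pev, List.map_cons, List.sum_cons]
    refine Hom.add ?_ (ih fun t ht => hl t (List.mem_cons_of_mem _ ht))
    have h1 := hl t List.mem_cons_self
    exact ((hom_int t.1).mul ((((hx.pow t.2.1).mul (hy.pow t.2.2.1)).mul
      (hz.pow t.2.2.2.1)).mul (hw.pow t.2.2.2.2))).congr (by omega)

/-- Component `0` of the product of the other conjugates. -/
def lP0 : List (ℤ × ℕ × ℕ × ℕ × ℕ) :=
      [(1, 6, 0, 0, 0), (-5, 4, 0, 1, 1), (4, 3, 2, 0, 1), (-3, 2, 1, 3, 0), (6, 2, 0, 2, 2), (4, 1,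
      3, 2, 0), (-2, 1, 2, 1, 2), (2, 1, 1, 0, 4), (-1, 0, 5, 1, 0), (1, 0, 4, 0, 2), (2, 0, 1, 4,
      1), (-1, 0, 0, 3, 3)]

/-- Component `1` of the product of the other conjugates. -/
def lP1 : List (ℤ × ℕ × ℕ × ℕ × ℕ) :=
      [(-1, 5, 1, 0, 0), (1, 3, 1, 1, 1), (-1, 3, 0, 0, 3), (-3, 2, 3, 0, 1), (1, 2, 0, 4, 0), (-3,
      1, 2, 3, 0), (-2, 1, 1, 2, 2), (2, 1, 0, 1, 4), (1, 0, 4, 2, 0), (-3, 0, 3, 1, 2), (1, 0, 2, 0,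
      4), (-1, 0, 0, 5, 1)]

/-- Component `2` of the product of the other conjugates. -/
def lP2 : List (ℤ × ℕ × ℕ × ℕ × ℕ) :=
      [(-1, 5, 0, 1, 0), (1, 4, 2, 0, 0), (4, 3, 0, 2, 1), (-2, 2, 2, 1, 1), (4, 2, 1, 0, 3), (2, 1,
      4, 0, 1), (2, 1, 1, 4, 0), (-3, 1, 0, 3, 2), (-1, 0, 3, 3, 0), (6, 0, 2, 2, 2), (-5, 0, 1, 1,
      4), (1, 0, 0, 0, 6)]

/-- Component `3` of the product of the other conjugates. -/
def lP3 : List (ℤ × ℕ × ℕ × ℕ × ℕ) :=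
      [(2, 4, 1, 1, 0), (1, 4, 0, 0, 2), (-1, 3, 3, 0, 0), (-2, 2, 1, 2, 1), (-3, 2, 0, 1, 3), (1, 1,
      3, 1, 1), (-3, 1, 2, 0, 3), (-1, 1, 0, 5, 0), (-1, 0, 5, 0, 1), (1, 0, 2, 4, 0), (-3, 0, 1, 3,
      2), (1, 0, 0, 2, 4)]

/-- Component `4` of the product of the other conjugates. -/
def lP4 : List (ℤ × ℕ × ℕ × ℕ × ℕ) :=
      [(1, 4, 0, 2, 0), (-3, 3, 2, 1, 0), (-3, 3, 1, 0, 2), (1, 2, 4, 0, 0), (-3, 2, 0, 3, 1), (-2,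
      1, 2, 2, 1), (1, 1, 1, 1, 3), (-1, 1, 0, 0, 5), (2, 0, 4, 1, 1), (-1, 0, 3, 0, 3), (-1, 0, 1,
      5, 0), (1, 0, 0, 4, 2)]

/-- Component `5` of the product of the other conjugates. -/
def lP5 : List (ℤ × ℕ × ℕ × ℕ × ℕ) :=
      [(-1, 5, 0, 0, 1), (-3, 3, 1, 2, 0), (4, 3, 0, 1, 2), (4, 2, 3, 1, 0), (-1, 2, 2, 0, 2), (-1,
      1, 5, 0, 0), (8, 1, 1, 3, 1), (-3, 1, 0, 2, 3), (-3, 0, 3, 2, 1), (4, 0, 2, 1, 3), (-1, 0, 1,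
      0, 5), (1, 0, 0, 6, 0)]

/-- Component `6` of the product of the other conjugates. -/
def lP6 : List (ℤ × ℕ × ℕ × ℕ × ℕ) :=
      [(2, 4, 1, 0, 1), (-1, 3, 0, 3, 0), (6, 2, 2, 2, 0), (-2, 2, 1, 1, 2), (1, 2, 0, 0, 4), (-5, 1,
      4, 1, 0), (4, 1, 3, 0, 2), (2, 1, 0, 4, 1), (1, 0, 6, 0, 0), (-3, 0, 2, 3, 1), (4, 0, 1, 2, 3),
      (-1, 0, 0, 1, 5)]

/-- The norm form. -/
def lN : List (ℤ × ℕ × ℕ × ℕ × ℕ) :=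
      [(1, 7, 0, 0, 0), (-7, 5, 0, 1, 1), (7, 4, 2, 0, 1), (-7, 3, 1, 3, 0), (14, 3, 0, 2, 2), (14,
      2, 3, 2, 0), (-7, 2, 2, 1, 2), (7, 2, 1, 0, 4), (-7, 1, 5, 1, 0), (7, 1, 4, 0, 2), (14, 1, 1,
      4, 1), (-7, 1, 0, 3, 3), (1, 0, 7, 0, 0), (-7, 0, 3, 3, 1), (14, 0, 2, 2, 3), (-7, 0, 1, 1, 5),
      (1, 0, 0, 7, 0), (1, 0, 0, 0, 7)]

lemma norm_id (x y z w : ℤ⟦X⟧) :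
    (pev lP0 x y z w + pev lP1 x y z w + pev lP2 x y z w + pev lP3 x y z w + pev lP4 x y z w
      + pev lP5 x y z w + pev lP6 x y z w) * (x + y + z + w) = pev lN x y z w := by
  simp only [pev, lP0, lP1, lP2, lP3, lP4, lP5, lP6, lN, List.map_cons, List.map_nil,
    List.sum_cons, List.sum_nil]
  push_cast
  ring

lemma norm_mod (x y z w : ℤ⟦X⟧) : pev lN x y z w = x ^ 7 + y ^ 7 + z ^ 7 + w ^ 7 + 7 *
      (-x^5*z*w + x^4*y^2*w - x^3*y*z^3 + 2*x^3*z^2*w^2 + 2*x^2*y^3*z^2 - x^2*y^2*z*w^2 + x^2*y*w^4 -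
      x*y^5*z + x*y^4*w^2 + 2*x*y*z^4*w - x*z^3*w^3 - y^3*z^3*w + 2*y^2*z^2*w^3 - y*z*w^5) := by
  simp only [pev, lN, List.map_cons, List.map_nil, List.sum_cons, List.sum_nil]
  push_cast
  ring

lemma P5_id (x y z w : ℤ⟦X⟧)
    (h2 : x^2*z + x*y^2 + z^2*w = 0)
    (h4 : x*z^2 + y^2*z + y*w^2 = 0)
    (h5 : x^2*w + y*z^2 + z*w^2 = 0)
    (h6 : x*y*w - z^3 = 0)
    : pev lP5 x y z w = 7 * (x^3*z*w^2 + x^2*y^3*z + 2*x*y*z^3*w + y^2*z*w^3) := by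
  simp only [pev, lP5, List.map_cons, List.map_nil, List.sum_cons, List.sum_nil]
  push_cast
  linear_combination (-3*x*y*z - 2*x*w^2 - y^3) * h2 + (x^2*y - 2*y*z*w - w^3) * h4 + (-x^3) * h5 + (-z^3) * h6

lemma A_sq (x y z w : ℤ⟦X⟧)
    (h2 : x^2*z + x*y^2 + z^2*w = 0)
    (h4 : x*z^2 + y^2*z + y*w^2 = 0)
    (h5 : x^2*w + y*z^2 + z*w^2 = 0)
    (h6 : x*y*w - z^3 = 0)
    : (x^3*z*w^2 + x^2*y^3*z + 2*x*y*z^3*w + y^2*z*w^3) ^ 2 = -z ^ 5 * (x ^ 7 + y ^ 7 + z ^ 7 + w ^ 7) + 7 *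
      (x^4*y*z^4*w^3 + x^3*y^2*z^2*w^5 + x^2*y^5*z^2*w^3 + x*y^7*z*w^3 + y^5*z^3*w^4) := by
  linear_combination (x^5*z^4 - x^4*y^2*z^3 + x^4*z*w^4 + x^3*y^4*z^2 + x^3*y^3*z*w^2 - x^3*y^2*w^4 - x^3*z^5*w -
      2*x^2*y^6*z - 2*x^2*y^5*w^2 + 2*x^2*y^2*z^4*w - 3*x^2*y*z^3*w^3 - x^2*z^2*w^5 + x*y^4*z^3*w +
      2*x*y^3*z^2*w^3 - 3*x*y^2*z*w^5 + x*z^6*w^2 + 2*y^6*z^2*w - 2*y^5*z*w^3 + 3*y^4*w^5 - y^3*z^6 +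
      y*z^4*w^4 + z^3*w^6) * h2 + (x^4*y^3*w^2 + 2*x^3*y^6 - 2*x*y^6*z*w - 3*x*y^5*w^3 + x*y^3*z^5 + x*y^2*z^4*w^2 + 2*x*y*z^3*w^4
      - 3*y^4*z^3*w^2 - 2*y^3*z^2*w^4 + y*z^7*w - z^6*w^3) * h4 + (y^6*z^3) * h5 + (-z^9) * h6

lemma pent_mod (k : ℤ) : pentagonal k % 7 = 0 ∨ pentagonal k % 7 = 1 ∨ pentagonal k % 7 = 2 ∨
    pentagonal k % 7 = 5 := by
  have h := two_mul_natCast_pentagonal k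
  have h2 : ∀ a n : ZMod 7, 2 * n = a * (3 * a - 1) → n = 0 ∨ n = 1 ∨ n = 2 ∨ n = 5 := by decide
  have h3 := h2 (k : ZMod 7) (pentagonal k : ZMod 7) (by exact_mod_cast congrArg (Int.cast : ℤ → ZMod 7) h)
  have h4 : ∀ r : ℕ, r < 7 → ((pentagonal k : ZMod 7) = (r : ZMod 7)) → pentagonal k % 7 = r := by
    intro r hr h
    rw [ZMod.natCast_eq_natCast_iff] at h
    have h' : pentagonal k % 7 = r % 7 := h
    rwa [Nat.mod_eq_of_lt hr] at h'
  rcases h3 with h | h | h | h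
  · exact Or.inl (h4 0 (by norm_num) (by simpa using h))
  · exact Or.inr (Or.inl (h4 1 (by norm_num) (by simpa using h)))
  · exact Or.inr (Or.inr (Or.inl (h4 2 (by norm_num) (by simpa using h))))
  · exact Or.inr (Or.inr (Or.inr (h4 5 (by norm_num) (by simpa using h))))

lemma pent_mod_two (k : ℤ) (h : pentagonal k % 7 = 2) :
    ∃ l : ℤ, k = 7 * l - 1 := by
  have h0 := two_mul_natCast_pentagonal k
  have h2 : ∀ a : ZMod 7, 2 * 2 = a * (3 * a - 1) → a = -1 := by decide
  have h1 : (pentagonal k : ZMod 7) = 2 := by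
    have : (pentagonal k : ZMod 7) = ((2 : ℕ) : ZMod 7) := by
      rw [ZMod.natCast_eq_natCast_iff]; exact h
    simpa using this
  have h3 := h2 (k : ZMod 7) (by
    have := congrArg (Int.cast : ℤ → ZMod 7) h0
    push_cast at this
    rwa [h1] at this)
  have h4 : ((k + 1 : ℤ) : ZMod 7) = 0 := by push_cast; rw [h3]; ring
  rw [ZMod.intCast_zmod_eq_zero_iff_dvd] at h4
  obtain ⟨l, hl⟩ := h4
  exact ⟨l, by push_cast at hl; linarith⟩

lemma pent_seven (l : ℤ) : pentagonal (7 * l - 1) = 49 * pentagonal l + 2 := by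
  have h1 := two_mul_natCast_pentagonal l
  have h2 := two_mul_natCast_pentagonal (7 * l - 1)
  zify
  linarith

lemma EE_decomp : EE = cpt 0 EE + cpt 1 EE + cpt 2 EE + cpt 5 EE := by
  ext n
  simp only [map_add, coeff_cpt]
  by_cases h : n ∈ Set.range pentagonal
  · obtain ⟨k, rfl⟩ := h
    rcases pent_mod k with h | h | h | h <;> simp [h]
  · simp [EE, coeff_pentagonalSeries_eq_zero ℤ h]

lemma negOne_seven (l : ℤ) : ((Int.negOnePow (7 * l - 1) : ℤˣ) : ℤ) = -((Int.negOnePow l : ℤˣ) : ℤ) := by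
  have : 7 * l - 1 = l + (2 * (3 * l - 1) + 1) := by ring
  rw [this, Int.negOnePow_add, Int.negOnePow_two_mul_add_one]
  simp

lemma EE_two : cpt 2 EE = -(X ^ 2 * expand 49 (by norm_num) EE) := by
  ext n
  rw [coeff_cpt, map_neg, coeff_X_pow_mul', coeff_expand]
  by_cases h : ∃ l, n = pentagonal (7 * l - 1)
  · obtain ⟨l, rfl⟩ := h
    rw [pent_seven, if_pos (by omega), if_pos (by omega), Nat.add_sub_cancel, if_pos (by simp),
      Nat.mul_div_cancel_left _ (by norm_num), ← pent_seven, EE, coeff_pentagonalSeries_pentagonal,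
      coeff_pentagonalSeries_pentagonal]
    exact negOne_seven l
  · push Not at h
    have h1 : (if n % 7 = 2 % 7 then coeff n EE else 0) = 0 := by
      split_ifs with hn
      · refine coeff_pentagonalSeries_eq_zero ℤ ?_
        rintro ⟨k, rfl⟩
        obtain ⟨l, rfl⟩ := pent_mod_two k hn
        exact h l rfl
      · rfl
    rw [h1]
    split_ifs with h2 h3
    · obtain ⟨m, hm⟩ := h3
      rw [hm, Nat.mul_div_cancel_left _ (by norm_num)]
      have : coeff m EE = 0 := by
        refine coeff_pentagonalSeries_eq_zero ℤ ?_
        rintro ⟨l, rfl⟩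
        exact h l (by rw [pent_seven]; omega)
      rw [this, neg_zero]
    · simp
    · simp

lemma EE_cube_mod (n : ℕ) (h : n % 7 = 2 ∨ n % 7 = 4 ∨ n % 7 = 5) : coeff n (EE ^ 3) = 0 := by
  refine EE_cube n fun j hj => ?_
  have h0 : ∀ a m : ZMod 7, (m = 2 ∨ m = 4 ∨ m = 5) → a * (a + 1) ≠ 2 * m := by decide
  refine h0 (j : ZMod 7) (n : ZMod 7) ?_ (by exact_mod_cast congrArg (Nat.cast : ℕ → ZMod 7) hj)
  have h1 : (n : ZMod 7) = ((n % 7 : ℕ) : ZMod 7) := by simp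
  rw [h1]
  rcases h with h | h | h <;> rw [h] <;> decide

lemma cpt_cube (r : ℕ) (hr : r = 2 ∨ r = 4 ∨ r = 5) : cpt r (EE ^ 3) = 0 := by
  ext n
  rw [coeff_cpt, map_zero]
  split_ifs with h
  · exact EE_cube_mod n (by omega)
  · rfl

/-- lists of the components of the cube -/
def lc0 : List (ℤ × ℕ × ℕ × ℕ × ℕ) :=
      [(1, 3, 0, 0, 0), (6, 1, 0, 1, 1), (3, 0, 2, 0, 1)]
/-- lists of the components of the cube -/
def lc1 : List (ℤ × ℕ × ℕ × ℕ × ℕ) :=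
      [(3, 2, 1, 0, 0), (6, 0, 1, 1, 1), (1, 0, 0, 0, 3)]
/-- lists of the components of the cube -/
def lc2 : List (ℤ × ℕ × ℕ × ℕ × ℕ) :=
      [(3, 2, 0, 1, 0), (3, 1, 2, 0, 0), (3, 0, 0, 2, 1)]
/-- lists of the components of the cube -/
def lc3 : List (ℤ × ℕ × ℕ × ℕ × ℕ) :=
      [(6, 1, 1, 1, 0), (3, 1, 0, 0, 2), (1, 0, 3, 0, 0)]
/-- lists of the components of the cube -/
def lc4 : List (ℤ × ℕ × ℕ × ℕ × ℕ) :=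
      [(3, 1, 0, 2, 0), (3, 0, 2, 1, 0), (3, 0, 1, 0, 2)]
/-- lists of the components of the cube -/
def lc5 : List (ℤ × ℕ × ℕ × ℕ × ℕ) :=
      [(3, 2, 0, 0, 1), (3, 0, 1, 2, 0), (3, 0, 0, 1, 2)]
/-- lists of the components of the cube -/
def lc6 : List (ℤ × ℕ × ℕ × ℕ × ℕ) :=
      [(6, 1, 1, 0, 1), (1, 0, 0, 3, 0)]

lemma cpt_sum (r : ℕ) (hr : r < 7) (F : ℕ → ℤ⟦X⟧) (hF : ∀ i, Hom i (F i)) :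
    cpt r (F 0 + F 1 + F 2 + F 3 + F 4 + F 5 + F 6) = F r := by
  simp only [cpt_add]
  have h : ∀ i, i < 7 → cpt r (F i) = if r = i then F r else 0 := by
    intro i hi
    split_ifs with h
    · rw [← h]; exact cpt_of_hom (hF r)
    · exact cpt_of_hom_ne (hF i) (by omega)
  rw [h 0, h 1, h 2, h 3, h 4, h 5, h 6] <;> try norm_num
  interval_cases r <;> simp

lemma rels : ∀ x y z w : ℤ⟦X⟧, x = cpt 0 EE → y = cpt 1 EE → z = cpt 2 EE → w = cpt 5 EE →
    x^2*z + x*y^2 + z^2*w = 0 ∧ x*z^2 + y^2*z + y*w^2 = 0 ∧ x^2*w + y*z^2 + z*w^2 = 0 ∧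
    x*y*w - z^3 = 0 := by
  intro x y z w hx hy hz hw
  have hE : EE = x + y + z + w := by rw [hx, hy, hz, hw]; exact EE_decomp
  have gx : Hom 0 x := hx ▸ hom_cpt 0 EE
  have gy : Hom 1 y := hy ▸ hom_cpt 1 EE
  have gz : Hom 2 z := hz ▸ hom_cpt 2 EE
  have gw : Hom 5 w := hw ▸ hom_cpt 5 EE
  have h3 : EE ^ 3 = pev lc0 x y z w + pev lc1 x y z w + pev lc2 x y z w + pev lc3 x y z w
      + pev lc4 x y z w + pev lc5 x y z w + pev lc6 x y z w := by
    rw [hE]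
    simp only [pev, lc0, lc1, lc2, lc3, lc4, lc5, lc6, List.map_cons, List.map_nil,
      List.sum_cons, List.sum_nil]
    push_cast
    ring
  have key : ∀ r, r = 2 ∨ r = 4 ∨ r = 5 →
      pev (match r with | 2 => lc2 | 4 => lc4 | _ => lc5) x y z w = 0 := by
    intro r hr
    have hs := cpt_sum r (by omega) (fun i => match i with
      | 0 => pev lc0 x y z w | 1 => pev lc1 x y z w | 2 => pev lc2 x y z w | 3 => pev lc3 x y z w
      | 4 => pev lc4 x y z w | 5 => pev lc5 x y z w | 6 => pev lc6 x y z w | _ => 0) (by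
        intro i
        match i with
        | 0 => exact hom_pev 0 _ x y z w gx gy gz gw (by decide)
        | 1 => exact hom_pev 1 _ x y z w gx gy gz gw (by decide)
        | 2 => exact hom_pev 2 _ x y z w gx gy gz gw (by decide)
        | 3 => exact hom_pev 3 _ x y z w gx gy gz gw (by decide)
        | 4 => exact hom_pev 4 _ x y z w gx gy gz gw (by decide)
        | 5 => exact hom_pev 5 _ x y z w gx gy gz gw (by decide)
        | 6 => exact hom_pev 6 _ x y z w gx gy gz gw (by decide)
        | _ + 7 => intro n _; exact map_zero _)
    simp only at hs
    rw [← h3, cpt_cube r hr] at hs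
    rcases hr with rfl | rfl | rfl <;> exact hs.symm
  have k2 := key 2 (by norm_num)
  have k4 := key 4 (by norm_num)
  have k5 := key 5 (by norm_num)
  simp only [pev, lc2, lc4, lc5, List.map_cons, List.map_nil, List.sum_cons, List.sum_nil] at k2 k4 k5
  push_cast at k2 k4 k5
  have three : (3 : ℤ⟦X⟧) ≠ 0 := fun h => by
    have h1 := congrArg (coeff 0) h
    rw [show (3 : ℤ⟦X⟧) = PowerSeries.C (3 : ℤ) by simp, coeff_C] at h1
    simp at h1
  have h2 : x^2*z + x*y^2 + z^2*w = 0 :=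
    mul_left_cancel₀ three (by linear_combination k2)
  have h4 : x*z^2 + y^2*z + y*w^2 = 0 :=
    mul_left_cancel₀ three (by linear_combination k4)
  have h5 : x^2*w + y*z^2 + z*w^2 = 0 :=
    mul_left_cancel₀ three (by linear_combination k5)
  have hw0 : w ≠ 0 := by
    intro h0
    have : coeff 5 w = 1 := by
      rw [hw, coeff_cpt, if_pos rfl]
      have : pentagonal 2 = 5 := by rw [pentagonal_def]; rfl
      rw [← this, EE, coeff_pentagonalSeries_pentagonal]
      simp [Int.negOnePow_even 2 (by decide)]
    rw [h0] at this
    simp at this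
  refine ⟨h2, h4, h5, mul_left_cancel₀ hw0 ?_⟩
  linear_combination -z * h2 + x * h4

lemma expand_eq_pow (F : (ZMod 7)⟦X⟧) : expand 7 (by norm_num) F = F ^ 7 := by
  have : Fact (Nat.Prime 7) := ⟨by norm_num⟩
  have h := MvPowerSeries.map_frobenius_expand (R := ZMod 7) (σ := Unit) 7 (by norm_num) (f := F)
  rw [ZMod.frobenius_zmod, MvPowerSeries.map_id] at h
  exact h

/-- Reduction modulo 7. -/
noncomputable def red : ℤ⟦X⟧ →+* (ZMod 7)⟦X⟧ := PowerSeries.map (Int.castRingHom (ZMod 7))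

lemma coeff_red (n : ℕ) (F : ℤ⟦X⟧) : coeff n (red F) = ((coeff n F : ℤ) : ZMod 7) := by
  simp [red]

lemma red_seven : red 7 = 0 := by
  have : (7 : (ZMod 7)⟦X⟧) = PowerSeries.C (7 : ZMod 7) := (map_ofNat _ 7).symm
  rw [map_ofNat, this, show (7 : ZMod 7) = 0 from rfl, map_zero]

lemma red_expand (F : ℤ⟦X⟧) : red (expand 49 (by norm_num) F) = red F ^ 49 := by
  have h : red (expand 49 (by norm_num) F) = expand 7 (by norm_num) (expand 7 (by norm_num) (red F)) := by
    ext n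
    rw [coeff_red, coeff_expand, coeff_expand]
    by_cases h : 49 ∣ n
    · obtain ⟨m, rfl⟩ := h
      have e : 49 * m / 7 = 7 * m := by omega
      rw [if_pos (by simp), if_pos (by omega), coeff_expand, e, if_pos (by simp), coeff_red]
      rw [Nat.mul_div_cancel_left _ (by norm_num), Nat.mul_div_cancel_left _ (by norm_num)]
    · rw [if_neg h]
      split_ifs with h1
      · rw [coeff_expand, if_neg (by omega)]; simp
      · simp
  rw [h, expand_eq_pow, expand_eq_pow, ← pow_mul]

lemma coeff_final (n : ℕ) : coeff (49 * n + 19) (X ^ 5 * red EE ^ 119) = 0 := by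
  have h : X ^ 5 * red EE ^ 119 =
      X ^ 5 * expand 7 (by norm_num) (expand 7 (by norm_num) (red EE ^ 2) * red (EE ^ 3)) := by
    rw [expand_eq_pow, expand_eq_pow, map_pow]; ring
  have e : 49 * n + 19 = 7 * (7 * n + 2) + 5 := by ring
  rw [h, e, coeff_X_pow_mul, coeff_expand_mul, coeff_mul]
  refine Finset.sum_eq_zero fun ij hij => ?_
  rw [Finset.HasAntidiagonal.mem_antidiagonal] at hij
  rw [coeff_expand]
  split_ifs with h7
  · rw [coeff_red, EE_cube_mod ij.2 (by omega)]; simp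
  · rw [zero_mul]

lemma main_dvd (n : ℕ) : (49 : ℤ) ∣ p (49 * n + 19) := by
  have : Fact (Nat.Prime 7) := ⟨by norm_num⟩
  obtain ⟨x, hx⟩ : ∃ x, x = cpt 0 EE := ⟨_, rfl⟩
  obtain ⟨y, hy⟩ : ∃ x, x = cpt 1 EE := ⟨_, rfl⟩
  obtain ⟨z, hz⟩ : ∃ x, x = cpt 2 EE := ⟨_, rfl⟩
  obtain ⟨w, hw⟩ : ∃ x, x = cpt 5 EE := ⟨_, rfl⟩
  have hE : EE = x + y + z + w := by rw [hx, hy, hz, hw]; exact EE_decomp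
  have gx : Hom 0 x := hx ▸ hom_cpt 0 EE
  have gy : Hom 1 y := hy ▸ hom_cpt 1 EE
  have gz : Hom 2 z := hz ▸ hom_cpt 2 EE
  have gw : Hom 5 w := hw ▸ hom_cpt 5 EE
  obtain ⟨h2, h4, h5, h6⟩ := rels x y z w hx hy hz hw
  have hN := norm_id x y z w
  have hP5 := P5_id x y z w h2 h4 h5 h6
  have hA := A_sq x y z w h2 h4 h5 h6
  have hmod := norm_mod x y z w
  have gN : Hom 0 (pev lN x y z w) := hom_pev 0 _ x y z w gx gy gz gw (by decide)
  have hs := cpt_sum 5 (by omega) (fun i => match i with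
      | 0 => pev lP0 x y z w | 1 => pev lP1 x y z w | 2 => pev lP2 x y z w | 3 => pev lP3 x y z w
      | 4 => pev lP4 x y z w | 5 => pev lP5 x y z w | 6 => pev lP6 x y z w | _ => 0) (by
        intro i
        match i with
        | 0 => exact hom_pev 0 _ x y z w gx gy gz gw (by decide)
        | 1 => exact hom_pev 1 _ x y z w gx gy gz gw (by decide)
        | 2 => exact hom_pev 2 _ x y z w gx gy gz gw (by decide)
        | 3 => exact hom_pev 3 _ x y z w gx gy gz gw (by decide)
        | 4 => exact hom_pev 4 _ x y z w gx gy gz gw (by decide)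
        | 5 => exact hom_pev 5 _ x y z w gx gy gz gw (by decide)
        | 6 => exact hom_pev 6 _ x y z w gx gy gz gw (by decide)
        | _ + 7 => intro n _; exact map_zero _)
  simp only at hs
  have hPN : pev lP0 x y z w + pev lP1 x y z w + pev lP2 x y z w + pev lP3 x y z w
      + pev lP4 x y z w + pev lP5 x y z w + pev lP6 x y z w = PP * pev lN x y z w := by
    rw [← hN, ← hE]
    have e := PP_mul_EE
    generalize pev lP0 x y z w + pev lP1 x y z w + pev lP2 x y z w + pev lP3 x y z w
      + pev lP4 x y z w + pev lP5 x y z w + pev lP6 x y z w = Q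
    linear_combination -Q * e
  rw [hPN, cpt_mul_hom 5 _ _ gN, hP5] at hs
  set A := x^3*z*w^2 + x^2*y^3*z + 2*x*y*z^3*w + y^2*z*w^3 with hAdef
  set NN := pev lN x y z w with hNN
  set e := red EE with he
  have he0 : e ≠ 0 := by
    intro h0
    have h1 := congrArg red PP_mul_EE
    rw [map_mul, ← he, h0, mul_zero, map_one] at h1
    exact zero_ne_one h1
  have hf7 : red (x ^ 7 + y ^ 7 + z ^ 7 + w ^ 7) = e ^ 7 := by
    rw [he, hE, ← expand_eq_pow]
    simp only [map_add, map_pow, expand_eq_pow]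
  have hNr : red NN = e ^ 7 := by
    rw [hmod, map_add, map_mul, red_seven, hf7]; ring
  have hzr : red z = -(X ^ 2 * e ^ 49) := by
    rw [hz, EE_two, map_neg, map_mul, red_expand, map_pow]
    congr 3
    simp [red]
  have hAr : red A ^ 2 = (X ^ 5 * e ^ 126) ^ 2 := by
    rw [← map_pow, hA, map_add, map_mul, map_mul, red_seven, hf7, map_neg, map_pow, hzr]
    ring
  have hphi : red (cpt 5 PP) = 0 := by
    have h1 := congrArg red hs
    rw [map_mul, map_mul, red_seven, zero_mul, hNr] at h1
    exact (mul_eq_zero.1 h1).resolve_right (pow_ne_zero _ he0)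
  obtain ⟨D, hD⟩ : ∃ D : ℤ⟦X⟧, cpt 5 PP = 7 * D := by
    refine ⟨PowerSeries.mk fun n => coeff n (cpt 5 PP) / 7, ?_⟩
    ext n
    have h1 : ((coeff n (cpt 5 PP) : ℤ) : ZMod 7) = 0 := by
      rw [← coeff_red, hphi, map_zero]
    rw [ZMod.intCast_zmod_eq_zero_iff_dvd] at h1
    have : (7 : ℤ⟦X⟧) = PowerSeries.C (7 : ℤ) := by simp
    rw [this, coeff_C_mul, coeff_mk]
    exact (Int.mul_ediv_cancel' h1).symm
  rw [hD, mul_assoc] at hs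
  have seven : (7 : ℤ⟦X⟧) ≠ 0 := fun h => by
    have h1 := congrArg (coeff 0) h
    rw [show (7 : ℤ⟦X⟧) = PowerSeries.C (7 : ℤ) by simp, coeff_C] at h1
    simp at h1
  have hDA : D * NN = A := mul_left_cancel₀ seven hs
  have hDr : red D * e ^ 7 = red A := by rw [← hNr, ← map_mul, hDA]
  have hco : coeff (49 * n + 19) (red D) = 0 := by
    have e7 : e ^ 7 ≠ 0 := pow_ne_zero _ he0
    rcases sq_eq_sq_iff_eq_or_eq_neg.1 hAr with h | h
    · have : red D = X ^ 5 * e ^ 119 := mul_right_cancel₀ e7 (by rw [hDr, h]; ring)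
      rw [this]; exact coeff_final n
    · have : red D = -(X ^ 5 * e ^ 119) := mul_right_cancel₀ e7 (by rw [hDr, h]; ring)
      rw [this, map_neg, neg_eq_zero]; exact coeff_final n
  rw [coeff_red, ZMod.intCast_zmod_eq_zero_iff_dvd] at hco
  have h9 := congrArg (coeff (49 * n + 19)) hD
  have : (7 : ℤ⟦X⟧) = PowerSeries.C (7 : ℤ) := by simp
  rw [this, coeff_C_mul, coeff_cpt, if_pos (by omega), PP, coeff_mk] at h9
  rw [h9]
  exact mul_dvd_mul_left 7 hco

/-- Ramanujan-type congruence: `p(49n + 19) ≡ 0 (mod 49)` for all `n ≥ 0`. -/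
theorem p_49n_add_19_mod_49 (n : ℕ) : p (49 * n + 19) % 49 = 0 := by
  have h := main_dvd n
  omega
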